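/- arXiv:2007.03064 — 2 statements merged into one kernel-verified Lean document; each statement's English description precedes it below -/
import Mathlib

section
/- Among all complete k-partite graphs on n vertices, the number of 5-cycle subgraphs is maximized when the part sizes are as equal as possible (each part has size ⌊n/k⌋ or ⌈n/k⌉). -/
/-- The number of (not necessarily induced) subgraphs of `G` isomorphic to the 5-cycle. -/
noncomputable def nuC5 {V : Type*} (G : SimpleGraph V) : ℕ :=
  Nat.card {H : G.Subgraph // Nonempty (H.coe ≃g SimpleGraph.cycleGraph 5)}

open Finset

def goodT (S T : Finset (Fin 5)) : Prop :=
  (∀ i, ¬ (i ∈ T ∧ i+1 ∈ T)) ∧ (∀ i, ¬ (i ∈ S \ T ∧ i+1 ∈ S \ T))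
instance (S T) : Decidable (goodT S T) := by unfold goodT; infer_instance

theorem opts : ∀ S : Finset (Fin 5),
   ((S.powerset.filter (goodT S)).val.map fun T => ((S \ T).card, T.card)) ∈
   ([{(0,0)}, {(1,0),(0,1)}, {(1,1),(1,1)}, {(2,0),(1,1),(1,1),(0,2)}, {(2,1),(1,2)},
     {(2,1),(1,2),(2,1),(1,2)}, {(2,2),(2,2)}, 0] : List (Multiset (ℕ × ℕ))) := by
  decide +kernel

theorem smooth5 (S : Finset (Fin 5)) (p q : ℕ) (h : q ≤ p) :
    ∑ T ∈ S.powerset.filter (goodT S), (p+1).descFactorial (S \ T).card * q.descFactorial T.card ≤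
    ∑ T ∈ S.powerset.filter (goodT S), p.descFactorial (S \ T).card * (q+1).descFactorial T.card := by
  have key : ∀ u v : ℕ, ∑ T ∈ S.powerset.filter (goodT S), u.descFactorial (S \ T).card * v.descFactorial T.card
     = (((S.powerset.filter (goodT S)).val.map fun T => ((S \ T).card, T.card)).map
        fun z => u.descFactorial z.1 * v.descFactorial z.2).sum := by
    intro u v
    rw [Multiset.map_map]; rfl
  rw [key, key]
  have := opts S
  generalize ((S.powerset.filter (goodT S)).val.map fun T => ((S \ T).card, T.card)) = M at this ⊢
  have h1 : (p+1) * q ≤ p * (q+1) := by nlinarith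
  rcases p with _ | p
  · obtain rfl : q = 0 := by omega
    simp only [List.mem_cons, List.not_mem_nil, or_false] at this
    rcases this with rfl | rfl | rfl | rfl | rfl | rfl | rfl | rfl <;> simp [Nat.descFactorial]
  rcases q with _ | q
  · simp only [List.mem_cons, List.not_mem_nil, or_false] at this
    rcases this with rfl | rfl | rfl | rfl | rfl | rfl | rfl | rfl <;> simp [Nat.descFactorial] <;> nlinarith
  have hqp : q ≤ p := by omega
  obtain ⟨r, rfl⟩ := Nat.exists_eq_add_of_le hqp
  have h2 := this
  simp only [List.mem_cons, List.not_mem_nil, or_false] at h2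
  rcases h2 with rfl | rfl | rfl | rfl | rfl | rfl | rfl | rfl <;> simp [Nat.descFactorial] <;> ring_nf <;> first | omega | nlinarith


open SimpleGraph in
theorem copy_card {V : Type*} [Finite V] (G : SimpleGraph V) :
    Nat.card (Copy (cycleGraph 5) G) = nuC5 G * Nat.card (cycleGraph 5 ≃g cycleGraph 5) := by
  classical
  have : Fintype V := Fintype.ofFinite V
  let X := {H : G.Subgraph // Nonempty (H.coe ≃g SimpleGraph.cycleGraph 5)}
  let F : (Σ H : X, (cycleGraph 5 ≃g H.1.coe)) → Copy (cycleGraph 5) G :=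
    fun z => z.1.1.coeCopy.comp z.2.toCopy
  have hF : ∀ z i, F z i = (z.2 i).1 := fun z i => rfl
  have hbij : Function.Bijective F := by
    constructor
    · rintro ⟨⟨H, hH⟩, e⟩ ⟨⟨H', hH'⟩, e'⟩ h
      have h1 : ∀ i, (e i).1 = (e' i).1 := fun i => DFunLike.congr_fun h i
      have hv : ∀ v, v ∈ H.verts ↔ ∃ i, (e i).1 = v := by
        intro v
        constructor
        · intro hv; exact ⟨e.symm ⟨v, hv⟩, by simp⟩
        · rintro ⟨i, rfl⟩; exact (e i).2
      have hv' : ∀ v, v ∈ H'.verts ↔ ∃ i, (e' i).1 = v := by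
        intro v
        constructor
        · intro hv; exact ⟨e'.symm ⟨v, hv⟩, by simp⟩
        · rintro ⟨i, rfl⟩; exact (e' i).2
      have ha : ∀ v w, H.Adj v w ↔ ∃ i j, (cycleGraph 5).Adj i j ∧ (e i).1 = v ∧ (e j).1 = w := by
        intro v w
        constructor
        · intro h
          refine ⟨e.symm ⟨v, h.fst_mem⟩, e.symm ⟨w, h.snd_mem⟩, ?_, by simp, by simp⟩
          rw [← e.map_adj_iff]; simpa using h
        · rintro ⟨i, j, hij, rfl, rfl⟩
          exact e.map_adj_iff.2 hij
      have ha' : ∀ v w, H'.Adj v w ↔ ∃ i j, (cycleGraph 5).Adj i j ∧ (e' i).1 = v ∧ (e' j).1 = w := by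
        intro v w
        constructor
        · intro h
          refine ⟨e'.symm ⟨v, h.fst_mem⟩, e'.symm ⟨w, h.snd_mem⟩, ?_, by simp, by simp⟩
          rw [← e'.map_adj_iff]; simpa using h
        · rintro ⟨i, j, hij, rfl, rfl⟩
          exact e'.map_adj_iff.2 hij
      have hHH : H = H' := by
        ext v w
        · rw [hv, hv']; simp only [h1]
        · rw [ha, ha']; simp only [h1]
      subst hHH
      have : e = e' := by
        ext i; exact h1 i
      subst this; rfl
    · intro f
      refine ⟨⟨⟨f.toSubgraph, ⟨f.isoToSubgraph.symm⟩⟩, f.isoToSubgraph⟩, ?_⟩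
      ext i; rfl
  rw [← Nat.card_congr (Equiv.ofBijective F hbij)]
  have : Fintype X := Fintype.ofFinite X
  have hfin : ∀ H : X, Finite (cycleGraph 5 ≃g H.1.coe) := fun H =>
    Finite.of_injective (fun f => (f : Fin 5 → H.1.verts)) DFunLike.coe_injective
  rw [Nat.card_sigma]
  have h2 : ∀ H : X, Nat.card (cycleGraph 5 ≃g H.1.coe) = Nat.card (cycleGraph 5 ≃g cycleGraph 5) := by
    rintro ⟨H, ⟨e⟩⟩
    exact Nat.card_congr ⟨fun f => f.trans e, fun f => f.trans e.symm,
      fun f => by ext i; simp, fun f => by ext i; simp⟩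
  rw [Finset.sum_congr rfl (fun H _ => h2 H)]
  simp [nuC5, X, Nat.card_eq_fintype_card]

/-- weight -/
def wt {k : ℕ} (x : Fin k → ℕ) (c : Fin 5 → Fin k) : ℕ :=
  ∏ t, (x t).descFactorial (#{i | c i = t})

def proper {k : ℕ} (c : Fin 5 → Fin k) : Prop := ∀ i, c i ≠ c (i+1)
instance {k : ℕ} (c : Fin 5 → Fin k) : Decidable (proper c) := by unfold proper; infer_instance

def NN {k : ℕ} (x : Fin k → ℕ) : ℕ := ∑ c : Fin 5 → Fin k with proper c, wt x c

open SimpleGraph in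
theorem proper_iff {k : ℕ} (c : Fin 5 → Fin k) : proper c ↔ ∀ i j, (cycleGraph 5).Adj i j → c i ≠ c j := by
  constructor
  · intro h i j hij
    have : j = i + 1 ∨ i = j + 1 := by
      revert i j; decide
    rcases this with rfl | rfl
    · exact h i
    · exact (h j).symm
  · intro h i
    apply h
    revert i; decide

open SimpleGraph in
theorem copy_eq {k : ℕ} (x : Fin k → ℕ) :
    Nat.card (Copy (cycleGraph 5) (completeMultipartiteGraph (fun t => Fin (x t)))) = NN x := by
  classical
  let F : (Σ c : {c : Fin 5 → Fin k // proper c}, ∀ t, ({i // c.1 i = t} ↪ Fin (x t))) →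
     Copy (cycleGraph 5) (completeMultipartiteGraph (fun t => Fin (x t))) := fun z =>
    ⟨⟨fun i => ⟨z.1.1 i, z.2 _ ⟨i, rfl⟩⟩, by
      intro i j hij
      exact (proper_iff _).1 z.1.2 i j hij⟩, by
      intro i j h
      have h1 : z.1.1 i = z.1.1 j := congrArg Sigma.fst h
      have h2 : ∀ t (hi : z.1.1 i = t) (hj : z.1.1 j = t), z.2 t ⟨i, hi⟩ = z.2 t ⟨j, hj⟩ := by
        rintro t hi rfl
        have h3 : (⟨z.1.1 i, z.2 _ ⟨i, rfl⟩⟩ : Σ t, Fin (x t)) = ⟨z.1.1 j, z.2 _ ⟨i, h1⟩⟩ := by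
          generalize z.1.1 j = t at h1; subst h1; rfl
        have h4 : (⟨z.1.1 j, z.2 _ ⟨i, h1⟩⟩ : Σ t, Fin (x t)) = ⟨z.1.1 j, z.2 _ ⟨j, rfl⟩⟩ := h3.symm.trans h
        simpa using h4
      simpa using (z.2 _).injective (h2 _ h1 rfl)⟩
  have hF : ∀ z i, F z i = ⟨z.1.1 i, z.2 _ ⟨i, rfl⟩⟩ := fun z i => rfl
  have hbij : Function.Bijective F := by
    constructor
    · rintro ⟨⟨c, hc⟩, g⟩ ⟨⟨c', hc'⟩, g'⟩ h
      have h1 : ∀ i, (⟨c i, g _ ⟨i, rfl⟩⟩ : Σ t, Fin (x t)) = ⟨c' i, g' _ ⟨i, rfl⟩⟩ :=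
        fun i => DFunLike.congr_fun h i
      have h2 : c = c' := funext fun i => congrArg Sigma.fst (h1 i)
      subst h2
      have : g = g' := by
        funext t; ext ⟨i, rfl⟩
        have := h1 i
        simp only [Sigma.mk.injEq, heq_eq_eq, true_and] at this
        rw [this]
      subst this; rfl
    · intro f
      refine ⟨⟨⟨fun i => (f i).1, ?_⟩, fun t => ⟨fun i => i.2 ▸ (f i.1).2, ?_⟩⟩, ?_⟩
      · rw [proper_iff]
        intro i j hij
        exact f.toHom.map_adj hij
      · rintro ⟨i, hi⟩ ⟨j, hj⟩ h
        have : f i = f j := by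
          have e1 : ∀ i (hi : (f i).1 = t), f i = ⟨t, hi ▸ (f i).2⟩ := by
            intro i hi; subst hi; rfl
          rw [e1 i hi, e1 j hj]; exact congrArg _ h
        simpa using f.injective this
      · apply Copy.ext; intro i; rfl
  rw [← Nat.card_congr (Equiv.ofBijective F hbij), Nat.card_sigma, NN, Finset.sum_subtype (p := proper)]
  · apply Finset.sum_congr rfl
    rintro ⟨c, hc⟩ _
    rw [Nat.card_pi]
    apply Finset.prod_congr rfl
    intro t _
    rw [Nat.card_eq_fintype_card, Fintype.card_embedding_eq, Fintype.card_fin, Fintype.card_subtype]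
  · simp

theorem smooth {k : ℕ} (x : Fin k → ℕ) (a b : Fin k) (hab : a ≠ b) (p q : ℕ) (hqp : q ≤ p)
    (hp : x a = p + 1) (hq : x b = q) (x' : Fin k → ℕ) (hp' : x' a = p) (hq' : x' b = q + 1)
    (hx' : ∀ t, t ≠ a → t ≠ b → x' t = x t) : NN x ≤ NN x' := by
  classical
  let D : Finset (Fin 5 → Fin k) := {d | (∀ i, d i ≠ b) ∧ ∀ i, d i = d (i+1) → d i = a}
  let S : (Fin 5 → Fin k) → Finset (Fin 5) := fun d => {i | d i = a}
  let mg : (Fin 5 → Fin k) → Finset (Fin 5) → Fin 5 → Fin k := fun d T i => if i ∈ T then b else d i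
  have hre : ∀ z : Fin k → ℕ, NN z = ∑ d ∈ D, ∑ T ∈ (S d).powerset.filter (goodT (S d)), wt z (mg d T) := by
    intro z
    rw [Finset.sum_sigma', NN]
    symm
    refine Finset.sum_nbij' (fun w => mg w.1 w.2)
      (fun c => ⟨fun i => if c i = b then a else c i, univ.filter (fun i => c i = b)⟩) ?_ ?_ ?_ ?_ ?_
    · rintro ⟨d, T⟩ h
      simp only [D, S, mg, goodT, mem_sigma, mem_filter, mem_univ, true_and, mem_powerset,
        subset_iff, mem_sdiff] at h ⊢
      obtain ⟨⟨h1, h2⟩, h3, h4, h5⟩ := h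
      intro i
      have := h1 i; have := h1 (i+1); have := h2 i; have := h4 i; have := h5 i
      by_cases hi : i ∈ T <;> by_cases hj : i + 1 ∈ T <;> simp only [hi, hj, if_true, if_false] <;> grind
    · intro c h
      simp only [D, S, goodT, mem_sigma, mem_filter, mem_univ, true_and, mem_powerset,
        subset_iff, mem_sdiff] at h ⊢
      refine ⟨⟨?_, ?_⟩, ?_, ?_, ?_⟩ <;> intro i <;> have := h i <;> grind
    · rintro ⟨d, T⟩ h
      simp only [D, S, mg, goodT, mem_sigma, mem_filter, mem_univ, true_and, mem_powerset,
        subset_iff, mem_sdiff] at h ⊢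
      obtain ⟨⟨h1, h2⟩, h3, h4, h5⟩ := h
      have e1 : (fun i => if (if i ∈ T then b else d i) = b then a else (if i ∈ T then b else d i)) = d := by
        funext i; grind
      have e2 : (univ.filter (fun i => (if i ∈ T then b else d i) = b)) = T := by
        ext i; simp; grind
      rw [e1, e2]
    · intro c h
      funext i
      simp only [mg, mem_filter, mem_univ, true_and]
      grind
    · intros; rfl
  have hw : ∀ z : Fin k → ℕ, ∀ d ∈ D, ∀ T ∈ (S d).powerset.filter (goodT (S d)),
      wt z (mg d T) = (∏ t ∈ (univ.erase a).erase b, (z t).descFactorial (#{i | d i = t})) *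
        ((z a).descFactorial (#(S d \ T)) * (z b).descFactorial (#T)) := by
    intro z d hd T hT
    simp only [D, S, goodT, mem_filter, mem_univ, true_and, mem_powerset, subset_iff] at hd hT
    rw [wt, ← Finset.mul_prod_erase univ _ (mem_univ a),
      ← Finset.mul_prod_erase (univ.erase a) _ (mem_erase.2 ⟨hab.symm, mem_univ b⟩)]
    have e1 : (univ.filter (fun i => mg d T i = a)) = S d \ T := by
      ext i; simp only [mg, S, mem_filter, mem_univ, true_and, mem_sdiff]; grind
    have e2 : (univ.filter (fun i => mg d T i = b)) = T := by
      ext i; simp only [mg, mem_filter, mem_univ, true_and]; grind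
    have e3 : ∀ t ∈ (univ.erase a).erase b, (z t).descFactorial (#{i | mg d T i = t}) =
        (z t).descFactorial (#{i | d i = t}) := by
      intro t ht
      simp only [mem_erase, mem_univ, and_true] at ht
      have : (univ.filter (fun i => mg d T i = t)) = univ.filter (fun i => d i = t) := by
        ext i; simp only [mg, mem_filter, mem_univ, true_and]; grind
      rw [this]
    rw [e1, e2, Finset.prod_congr rfl e3]
    ring
  rw [hre, hre]
  apply Finset.sum_le_sum
  intro d hd
  rw [Finset.sum_congr rfl (hw x d hd), Finset.sum_congr rfl (hw x' d hd), ← Finset.mul_sum, ← Finset.mul_sum]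
  have e : ∏ t ∈ (univ.erase a).erase b, (x' t).descFactorial (#{i | d i = t}) =
      ∏ t ∈ (univ.erase a).erase b, (x t).descFactorial (#{i | d i = t}) := by
    apply Finset.prod_congr rfl
    intro t ht
    simp only [mem_erase, mem_univ, and_true] at ht
    rw [hx' t ht.2 ht.1]
  rw [e, hp, hq, hp', hq']
  exact Nat.mul_le_mul_left _ (smooth5 (S d) p q hqp)

theorem NN_le {k : ℕ} (y : Fin k → ℕ) (hbal : ∀ i j, y i ≤ y j + 1) :
    ∀ (m : ℕ) (x : Fin k → ℕ), ∑ i, x i = ∑ i, y i → ∑ i, (x i - y i) = m → NN x ≤ NN y := by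
  classical
  intro m
  induction m with
  | zero =>
    intro x hs h0
    have h1 : ∀ i, x i ≤ y i := by
      intro i
      have := (Finset.sum_eq_zero_iff.1 h0) i (mem_univ i)
      omega
    have : x = y := by
      funext i
      exact (Finset.sum_eq_sum_iff_of_le (fun i _ => h1 i)).1 hs i (mem_univ i)
    rw [this]
  | succ m ih =>
    intro x hs hm
    obtain ⟨a, ha⟩ : ∃ a, y a < x a := by
      by_contra! hcon
      have : ∑ i, (x i - y i) = 0 := Finset.sum_eq_zero fun i _ => by have := hcon i; omega
      omega
    obtain ⟨b, hb⟩ : ∃ b, x b < y b := by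
      by_contra! hcon
      have := Finset.sum_lt_sum (fun i _ => hcon i) ⟨a, mem_univ a, ha⟩
      omega
    have hab : a ≠ b := by rintro rfl; omega
    have hba := hbal b a
    let x' : Fin k → ℕ := Function.update (Function.update x a (x a - 1)) b (x b + 1)
    have hp' : x' a = x a - 1 := by simp [x', hab]
    have hq' : x' b = x b + 1 := by simp [x']
    have ho : ∀ t, t ≠ a → t ≠ b → x' t = x t := by intro t h1 h2; simp [x', h1, h2]
    have split : ∀ f : Fin k → ℕ, ∑ i, f i = f a + (f b + ∑ i ∈ (univ.erase a).erase b, f i) := by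
      intro f
      rw [← Finset.add_sum_erase univ _ (mem_univ a),
        ← Finset.add_sum_erase (univ.erase a) _ (mem_erase.2 ⟨hab.symm, mem_univ b⟩)]
    have ho' : ∀ t ∈ (univ.erase a).erase b, x' t = x t := by
      intro t ht
      simp only [mem_erase, mem_univ, and_true] at ht
      exact ho t ht.2 ht.1
    refine le_trans (smooth x a b hab (x a - 1) (x b) (by omega) (by omega) rfl x' hp' hq' ho) (ih x' ?_ ?_)
    · have e1 := split x'
      have e2 := split x
      have e3 : ∑ i ∈ (univ.erase a).erase b, x' i = ∑ i ∈ (univ.erase a).erase b, x i :=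
        Finset.sum_congr rfl ho'
      omega
    · rw [split, Finset.sum_congr rfl (fun t ht => by rw [ho' t ht]), hp', hq']
      rw [split] at hm
      omega

theorem stmt_11 (k n : ℕ) (x : Fin k → ℕ) (hx : ∑ i, x i = n)
    (y : Fin k → ℕ) (hy : ∑ i, y i = n) (hbal : ∀ i j, y i ≤ y j + 1) :
    nuC5 (SimpleGraph.completeMultipartiteGraph (fun t => Fin (x t))) ≤
      nuC5 (SimpleGraph.completeMultipartiteGraph (fun t => Fin (y t))) := by
  have h := NN_le y hbal _ x (hx.trans hy.symm) rfl
  rw [← copy_eq, ← copy_eq, copy_card, copy_card] at h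
  have : Finite (SimpleGraph.cycleGraph 5 ≃g SimpleGraph.cycleGraph 5) :=
    Finite.of_injective (fun f => (f : Fin 5 → Fin 5)) DFunLike.coe_injective
  have : Nonempty (SimpleGraph.cycleGraph 5 ≃g SimpleGraph.cycleGraph 5) :=
    ⟨SimpleGraph.Iso.refl⟩
  exact Nat.le_of_mul_le_mul_right h Nat.card_pos
end

section
/- In any complete k-partite graph with parts of sizes x1,...,xk, the number of 5-cycle subgraphs is ν(C5) = 12 e5(x) + 6 Σ_{a} (xa choose 2)·e3(x without a) + 4 Σ_{a<b} (xa choose 2)(xb choose 2)·(Σ_{c≠a,b} xc), where e_j denotes the elementary symmetric polynomials. -/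
open SimpleGraph in
theorem aut5 : Nat.card (cycleGraph 5 ≃g cycleGraph 5) = 10 := by
  have e : (cycleGraph 5 ≃g cycleGraph 5) ≃
      {p : Equiv.Perm (Fin 5) // ∀ a b, (cycleGraph 5).Adj (p a) (p b) ↔ (cycleGraph 5).Adj a b} :=
    { toFun := fun f => ⟨f.toEquiv, fun a b => f.map_rel_iff⟩
      invFun := fun p => ⟨p.1, fun {a b} => p.2 a b⟩
      left_inv := fun f => rfl
      right_inv := fun p => rfl }
  rw [Nat.card_congr e, Nat.card_eq_fintype_card, Fintype.card_subtype]
  decide +kernel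

open SimpleGraph in
theorem copies_eq {V : Type*} [Finite V] (G : SimpleGraph V) :
    Nat.card (Copy (cycleGraph 5) G) =
      10 * Nat.card {H : G.Subgraph // Nonempty (H.coe ≃g cycleGraph 5)} := by
  let F : (Σ H : {H : G.Subgraph // Nonempty (H.coe ≃g cycleGraph 5)},
      (cycleGraph 5 ≃g H.1.coe)) → Copy (cycleGraph 5) G := fun q =>
    ⟨q.1.1.hom.comp q.2.toHom, Subgraph.hom_injective.comp q.2.injective⟩
  have hsub : ∀ q, (F q).toSubgraph = q.1.1 := by
    intro q
    simp [F, Copy.toSubgraph, Subgraph.map_comp]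
  have hF : Function.Bijective F := by
    constructor
    · rintro ⟨⟨H, hH⟩, e⟩ ⟨⟨H', hH'⟩, e'⟩ h
      have h1 : H = H' := by
        have := hsub ⟨⟨H, hH⟩, e⟩
        rw [h, hsub] at this
        exact this.symm
      subst h1
      have : e = e' := by
        ext a
        have := congrArg (fun g : Copy (cycleGraph 5) G => g a) h
        exact this
      rw [this]
    · intro f
      refine ⟨⟨⟨f.toSubgraph, ⟨f.isoToSubgraph.symm⟩⟩, f.isoToSubgraph⟩, ?_⟩
      ext a
      rfl
  have : Finite (G.Subgraph) := inferInstance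
  rw [← Nat.card_congr (Equiv.ofBijective F hF)]
  have hc : ∀ H : {H : G.Subgraph // Nonempty (H.coe ≃g cycleGraph 5)},
      Nat.card (cycleGraph 5 ≃g H.1.coe) = 10 := by
    rintro ⟨H, ⟨e⟩⟩
    rw [← aut5]
    exact Nat.card_congr 
      { toFun := fun f => f.trans e
        invFun := fun f => f.trans e.symm
        left_inv := fun f => by ext; simp
        right_inv := fun f => by ext; simp }
  have := Fintype.ofFinite {H : G.Subgraph // Nonempty (H.coe ≃g cycleGraph 5)}
  have (H : {H : G.Subgraph // Nonempty (H.coe ≃g cycleGraph 5)}) : Finite (cycleGraph 5 ≃g H.1.coe) :=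
    Nat.finite_of_card_ne_zero (by rw [hc]; norm_num)
  rw [Nat.card_sigma]
  simp [hc, mul_comm]

section
open Finset
theorem sum_powersetCard_succ' {α : Type*} [DecidableEq α] (T : Finset α) (n : ℕ) (h : α → Finset α → ℕ) :
    ∑ s ∈ T.powersetCard (n+1), ∑ a ∈ s, h a (s.erase a) =
      ∑ a ∈ T, ∑ s ∈ (T.erase a).powersetCard n, h a s := by
  rw [Finset.sum_sigma', Finset.sum_sigma']
  refine Finset.sum_bij' (fun q _ => ⟨q.2, q.1.erase q.2⟩) (fun q _ => ⟨insert q.1 q.2, q.1⟩) ?_ ?_ ?_ ?_ ?_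
  · rintro ⟨s, a⟩ hq
    simp only [mem_sigma, mem_powersetCard] at hq ⊢
    refine ⟨hq.1.1 hq.2, erase_subset_erase _ hq.1.1, ?_⟩
    rw [card_erase_of_mem hq.2, hq.1.2]; rfl
  · rintro ⟨a, s⟩ hq
    simp only [mem_sigma, mem_powersetCard] at hq ⊢
    have ha : a ∉ s := fun h => by simpa using hq.2.1 h
    refine ⟨⟨insert_subset hq.1 (hq.2.1.trans (erase_subset _ _)), ?_⟩, mem_insert_self _ _⟩
    rw [card_insert_of_notMem ha, hq.2.2]
  · rintro ⟨s, a⟩ hq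
    simp only [mem_sigma, mem_powersetCard] at hq ⊢
    simp [insert_erase hq.2]
  · rintro ⟨a, s⟩ hq
    simp only [mem_sigma, mem_powersetCard] at hq ⊢
    have ha : a ∉ s := fun h => by simpa using hq.2.1 h
    simp [erase_insert ha]
  · rintro ⟨s, a⟩ hq
    rfl

theorem esymm_rec {α : Type*} [DecidableEq α] (T : Finset α) (n : ℕ) (x : α → ℕ) :
    (n+1) * ∑ s ∈ T.powersetCard (n+1), ∏ i ∈ s, x i =
      ∑ a ∈ T, x a * ∑ s ∈ (T.erase a).powersetCard n, ∏ i ∈ s, x i := by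
  have := sum_powersetCard_succ' T n (fun a s => x a * ∏ i ∈ s, x i)
  simp only [mul_sum, ← this]
  apply sum_congr rfl
  intro s hs
  rw [sum_congr rfl (fun a ha => mul_prod_erase s x ha)]
  simp [(mem_powersetCard.1 hs).2]

theorem esymm3 {α : Type*} [DecidableEq α] (T : Finset α) (x : α → ℕ) :
    6 * ∑ s ∈ T.powersetCard 3, ∏ i ∈ s, x i =
      ∑ a ∈ T, x a * ∑ b ∈ T.erase a, x b * ∑ c ∈ (T.erase a).erase b, x c := by
  have h1 : ∀ T : Finset α, ∑ s ∈ T.powersetCard 1, ∏ i ∈ s, x i = ∑ c ∈ T, x c := by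
    intro T
    have := esymm_rec T 0 x
    simpa using this
  have h2 : ∀ T : Finset α, 2 * ∑ s ∈ T.powersetCard 2, ∏ i ∈ s, x i =
      ∑ b ∈ T, x b * ∑ c ∈ T.erase b, x c := by
    intro T
    have := esymm_rec T 1 x
    simpa only [h1] using this
  have h3 := esymm_rec T 2 x
  simp only [← h2, mul_left_comm _ 2, ← mul_sum]
  norm_num at h3
  rw [← h3]; ring

theorem esymm5 {α : Type*} [DecidableEq α] (T : Finset α) (x : α → ℕ) :
    120 * ∑ s ∈ T.powersetCard 5, ∏ i ∈ s, x i =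
      ∑ a ∈ T, x a * ∑ b ∈ T.erase a, x b * ∑ c ∈ (T.erase a).erase b, 
       x c * ∑ d ∈ ((T.erase a).erase b).erase c, x d * ∑ e ∈ (((T.erase a).erase b).erase c).erase d, x e := by
  have h4 : ∀ T : Finset α, _ := fun T => esymm_rec T 3 x
  have h5 := esymm_rec T 4 x
  have pull : ∀ (T : Finset α) (m : ℕ) (f g : α → ℕ),
      ∑ b ∈ T, f b * (m * g b) = m * ∑ b ∈ T, f b * g b := by
    intro T m f g
    rw [mul_sum]
    exact sum_congr rfl fun b _ => by ring
  norm_num at h4 h5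
  simp only [← esymm3]
  simp only [pull, ← h4]
  rw [← h5]; ring

theorem pairs2 {α : Type*} [DecidableEq α] (T : Finset α) (y x : α → ℕ) :
    2 * ∑ s ∈ T.powersetCard 2, (∏ i ∈ s, y i) * ∑ c ∈ T \ s, x c =
      ∑ a ∈ T, y a * ∑ b ∈ T.erase a, y b * ∑ c ∈ (T.erase a).erase b, x c := by
  have h := sum_powersetCard_succ' T 1 (fun a s => y a * ((∏ i ∈ s, y i) * ∑ c ∈ (T.erase a) \ s, x c))
  simp only [powersetCard_one, sum_map] at h
  convert h using 1
  · rw [mul_sum]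
    apply sum_congr rfl
    intro s hs
    have hh : ∀ a ∈ s, y a * ((∏ i ∈ s.erase a, y i) * ∑ c ∈ T.erase a \ s.erase a, x c) =
        (∏ i ∈ s, y i) * ∑ c ∈ T \ s, x c := by
      intro a ha
      rw [← mul_assoc, mul_prod_erase s y ha]
      congr 2
      ext c
      simp only [mem_sdiff, mem_erase]
      grind
    rw [sum_congr rfl hh]
    simp [(mem_powersetCard.1 hs).2]
  · simp [sdiff_singleton_eq_erase, mul_sum]

/-- labelled 5-cycles in a complete multipartite graph with colouring `c` -/
def P5 {V K : Type*} (c : V → K) (f : Fin 5 → V) : Prop :=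
  (c (f 0) ≠ c (f 1) ∧ c (f 1) ≠ c (f 2) ∧ c (f 2) ≠ c (f 3) ∧ c (f 3) ≠ c (f 4) ∧ c (f 4) ≠ c (f 0))
  ∧ f 0 ≠ f 2 ∧ f 1 ≠ f 3 ∧ f 2 ≠ f 4 ∧ f 3 ≠ f 0 ∧ f 4 ≠ f 1

/-- all five colours distinct -/
def A5 {V K : Type*} (c : V → K) (f : Fin 5 → V) : Prop :=
  c (f 0) ≠ c (f 1) ∧ c (f 0) ≠ c (f 2) ∧ c (f 0) ≠ c (f 3) ∧ c (f 0) ≠ c (f 4) ∧ c (f 1) ≠ c (f 2) ∧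
  c (f 1) ≠ c (f 3) ∧ c (f 1) ≠ c (f 4) ∧ c (f 2) ≠ c (f 3) ∧ c (f 2) ≠ c (f 4) ∧ c (f 3) ≠ c (f 4)

/-- exactly the vertices 0 and 2 share a colour -/
def B5 {V K : Type*} (c : V → K) (f : Fin 5 → V) : Prop :=
  (c (f 0) = c (f 2) ∧ f 0 ≠ f 2) ∧ c (f 0) ≠ c (f 1) ∧ c (f 0) ≠ c (f 3) ∧ c (f 0) ≠ c (f 4) ∧
  c (f 1) ≠ c (f 3) ∧ c (f 1) ≠ c (f 4) ∧ c (f 3) ≠ c (f 4)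

/-- exactly the pairs 0, 2 and 1, 3 share colours -/
def C5 {V K : Type*} (c : V → K) (f : Fin 5 → V) : Prop :=
  (c (f 0) = c (f 2) ∧ f 0 ≠ f 2) ∧ (c (f 1) = c (f 3) ∧ f 1 ≠ f 3) ∧ 
  c (f 0) ≠ c (f 1) ∧ c (f 0) ≠ c (f 4) ∧ c (f 1) ≠ c (f 4)

open Classical in
theorem split5 {V K : Type*} (c : V → K) (f : Fin 5 → V) :
    (if P5 c f then 1 else 0 : ℕ) = (if A5 c f then 1 else 0)
      + ∑ r : Fin 5, (if B5 c (fun i => f (i + r)) then 1 else 0)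
      + ∑ r : Fin 5, (if C5 c (fun i => f (i + r)) then 1 else 0) := by
  simp only [Fin.sum_univ_five, P5, A5, B5, C5]
  simp only [Fin.isValue, Fin.reduceAdd]
  by_cases h1 : c (f 0) = c (f 1)
  · grind
  by_cases h2 : c (f 1) = c (f 2)
  · grind
  by_cases h3 : c (f 2) = c (f 3)
  · grind
  by_cases h4 : c (f 3) = c (f 4)
  · grind
  by_cases h5 : c (f 4) = c (f 0)
  · grind
  by_cases g1 : c (f 0) = c (f 2) <;> by_cases g2 : c (f 1) = c (f 3) <;>
    by_cases g3 : c (f 2) = c (f 4) <;>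
    by_cases g4 : c (f 3) = c (f 0) <;> by_cases g5 : c (f 4) = c (f 1) <;> grind

open Classical in
theorem sum_split5 {V K : Type*} [Fintype V] (c : V → K) :
    Nat.card {f : Fin 5 → V // P5 c f} = (∑ f : Fin 5 → V, if A5 c f then 1 else 0)
      + 5 * (∑ f : Fin 5 → V, if B5 c f then 1 else 0)
      + 5 * (∑ f : Fin 5 → V, if C5 c f then 1 else 0) := by
  rw [Nat.card_eq_fintype_card, Fintype.card_subtype, Finset.card_filter]
  simp only [split5, sum_add_distrib]
  have key : ∀ Q : (Fin 5 → V) → ℕ, ∑ f : Fin 5 → V, ∑ r : Fin 5, Q (fun i => f (i + r)) = 5 * ∑ f, Q f := by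
    intro Q
    rw [sum_comm]
    have : ∀ r : Fin 5, ∑ f : Fin 5 → V, Q (fun i => f (i + r)) = ∑ f, Q f := by
      intro r
      exact Equiv.sum_comp ((Equiv.addRight r).symm.arrowCongr (Equiv.refl V)) Q
    simp [this]
  rw [key (fun f => if B5 c f then 1 else 0), key (fun f => if C5 c f then 1 else 0)]

theorem sum_fun5 {V : Type*} [Fintype V] (Q : (Fin 5 → V) → ℕ) :
    ∑ f, Q f = ∑ a : V, ∑ b : V, ∑ c : V, ∑ d : V, ∑ e : V, Q ![a, b, c, d, e] := by
  have e := fun n (Q : (Fin (n+1) → V) → ℕ) => (Equiv.sum_comp (Fin.consEquiv (fun _ : Fin (n+1) => V)) Q).symm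
  simp only [e, Fintype.sum_prod_type]
  simp [Fin.consEquiv]
  rfl

theorem sum_fun5' {V : Type*} [Fintype V] (σ : Equiv.Perm (Fin 5)) (Q : (Fin 5 → V) → ℕ) :
    ∑ f, Q f = ∑ a : V, ∑ b : V, ∑ c : V, ∑ d : V, ∑ e : V, Q (![a, b, c, d, e] ∘ σ) := by
  rw [← sum_fun5 (fun f => Q (f ∘ σ))]
  exact (Equiv.sum_comp (σ.symm.arrowCongr (Equiv.refl V)) Q).symm

open Classical in
theorem sum_same {k : ℕ} (x : Fin k → ℕ) (v : Σ t, Fin (x t)) :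
    (∑ w : (Σ t, Fin (x t)), if v.1 = w.1 ∧ v ≠ w then 1 else 0) = x v.1 - 1 := by
  obtain ⟨t, i⟩ := v
  rw [Fintype.sum_sigma, Finset.sum_eq_single t]
  · have h : ∀ j : Fin (x t), (if t = t ∧ (⟨t, i⟩ : Σ t, Fin (x t)) ≠ ⟨t, j⟩ then 1 else 0 : ℕ) =
        if j ∈ univ.erase i then 1 else 0 := by
      intro j
      congr 1
      simp [eq_comm]
    rw [sum_congr rfl (fun j _ => h j), ← Finset.card_filter, Finset.filter_mem_eq_inter, univ_inter,
      card_erase_of_mem (mem_univ i)]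
    simp
  · intro b _ hb
    simp [hb.symm]
  · simp

theorem sum_col {k : ℕ} (x : Fin k → ℕ) (g : Fin k → ℕ) :
    (∑ w : (Σ t, Fin (x t)), g w.1) = ∑ t, x t * g t := by
  simp [Fintype.sum_sigma]

theorem col3 {k : ℕ} (x : Fin k → ℕ) (g : Fin k → Fin k → Fin k → ℕ) :
    (∑ a : (Σ t, Fin (x t)), ∑ b : (Σ t, Fin (x t)), ∑ c : (Σ t, Fin (x t)), g a.1 b.1 c.1) =
      ∑ a, ∑ b, ∑ c, x a * (x b * (x c * g a b c)) := by
  have h1 := fun a b => sum_col x (fun c => g a b c)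
  have h2 := fun a => sum_col x (fun b => ∑ c, x c * g a b c)
  have h3 := sum_col x (fun a => ∑ b, x b * ∑ c, x c * g a b c)
  simp only [h1, h2, h3]
  simp only [mul_sum]

theorem col4 {k : ℕ} (x : Fin k → ℕ) (g : Fin k → Fin k → Fin k → Fin k → ℕ) :
    (∑ a : (Σ t, Fin (x t)), ∑ b : (Σ t, Fin (x t)), ∑ c : (Σ t, Fin (x t)),
      ∑ d : (Σ t, Fin (x t)), g a.1 b.1 c.1 d.1) =
      ∑ a, ∑ b, ∑ c, ∑ d, x a * (x b * (x c * (x d * g a b c d))) := by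
  have h1 := fun a => col3 x (fun b c d => g a b c d)
  have h2 := sum_col x (fun a => ∑ b, ∑ c, ∑ d, x b * (x c * (x d * g a b c d)))
  simp only [h1, h2, mul_sum]

theorem col5 {k : ℕ} (x : Fin k → ℕ) (g : Fin k → Fin k → Fin k → Fin k → Fin k → ℕ) :
    (∑ a : (Σ t, Fin (x t)), ∑ b : (Σ t, Fin (x t)), ∑ c : (Σ t, Fin (x t)),
      ∑ d : (Σ t, Fin (x t)), ∑ e : (Σ t, Fin (x t)), g a.1 b.1 c.1 d.1 e.1) =
      ∑ a, ∑ b, ∑ c, ∑ d, ∑ e, x a * (x b * (x c * (x d * (x e * g a b c d e)))) := by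
  have h1 := fun a => col4 x (fun b c d e => g a b c d e)
  have h2 := sum_col x (fun a => ∑ b, ∑ c, ∑ d, ∑ e, x b * (x c * (x d * (x e * g a b c d e))))
  simp only [h1, h2, mul_sum]

theorem sum_er {α : Type*} [DecidableEq α] (T : Finset α) (a : α) (g : α → ℕ) :
    ∑ c ∈ T.erase a, g c = ∑ c ∈ T, (if a ≠ c then 1 else 0) * g c := by
  simp only [ite_mul, one_mul, zero_mul, ← Finset.sum_filter, Finset.filter_ne]

theorem ite_and_one (p q : Prop) [Decidable p] [Decidable q] [Decidable (p ∧ q)] :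
    (if p ∧ q then 1 else 0 : ℕ) = (if p then 1 else 0) * (if q then 1 else 0) := by
  by_cases p <;> by_cases q <;> simp [*]

open Classical in
theorem evalA {k : ℕ} (x : Fin k → ℕ) :
    (∑ f : Fin 5 → (Σ t, Fin (x t)), if A5 (fun v => v.1) f then 1 else 0) =
      ∑ a, x a * ∑ b ∈ univ.erase a, x b * ∑ c ∈ (univ.erase a).erase b, 
       x c * ∑ d ∈ ((univ.erase a).erase b).erase c, x d * ∑ e ∈ (((univ.erase a).erase b).erase c).erase d, x e := by
  rw [sum_fun5]
  have : ∀ a b c d e : (Σ t, Fin (x t)), A5 (fun v => v.1) ![a,b,c,d,e] ↔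
      a.1 ≠ b.1 ∧ a.1 ≠ c.1 ∧ a.1 ≠ d.1 ∧ a.1 ≠ e.1 ∧ b.1 ≠ c.1 ∧ b.1 ≠ d.1 ∧ b.1 ≠ e.1 ∧
      c.1 ≠ d.1 ∧ c.1 ≠ e.1 ∧ d.1 ≠ e.1 := fun _ _ _ _ _ => Iff.rfl
  simp only [this, ite_and_one]
  refine (col5 x (fun a b c d e => (if a ≠ b then 1 else 0) * ((if a ≠ c then 1 else 0) *
    ((if a ≠ d then 1 else 0) * ((if a ≠ e then 1 else 0) * ((if b ≠ c then 1 else 0) *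
    ((if b ≠ d then 1 else 0) * ((if b ≠ e then 1 else 0) * ((if c ≠ d then 1 else 0) *
    ((if c ≠ e then 1 else 0) * (if d ≠ e then 1 else 0))))))))))).trans ?_
  simp only [sum_er, mul_sum]
  refine sum_congr rfl fun a _ => sum_congr rfl fun b _ => sum_congr rfl fun c _ =>
    sum_congr rfl fun d _ => sum_congr rfl fun e _ => ?_
  ring

def σB : Equiv.Perm (Fin 5) := ⟨![0,1,4,2,3], ![0,1,3,4,2], by decide, by decide⟩
def σC : Equiv.Perm (Fin 5) := ⟨![0,1,3,4,2], ![0,1,4,2,3], by decide, by decide⟩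

open Classical in
theorem evalB {k : ℕ} (x : Fin k → ℕ) :
    (∑ f : Fin 5 → (Σ t, Fin (x t)), if B5 (fun v => v.1) f then 1 else 0) =
      ∑ a, (x a * (x a - 1)) * ∑ b ∈ univ.erase a, x b * ∑ c ∈ (univ.erase a).erase b, 
       x c * ∑ d ∈ ((univ.erase a).erase b).erase c, x d := by
  rw [sum_fun5' σB]
  have : ∀ a b c d e : (Σ t, Fin (x t)), (if B5 (fun v => v.1) (![a,b,c,d,e] ∘ σB) then 1 else 0 : ℕ) = 
      ((if a.1 ≠ b.1 then 1 else 0) * (if a.1 ≠ c.1 then 1 else 0) * (if a.1 ≠ d.1 then 1 else 0) *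
      (if b.1 ≠ c.1 then 1 else 0) * (if b.1 ≠ d.1 then 1 else 0) * (if c.1 ≠ d.1 then 1 else 0)) *
      (if a.1 = e.1 ∧ a ≠ e then 1 else 0) := by
    intro a b c d e
    have : B5 (fun v => v.1) (![a,b,c,d,e] ∘ σB) ↔ (a.1 = e.1 ∧ a ≠ e) ∧ a.1 ≠ b.1 ∧ a.1 ≠ c.1 ∧ a.1 ≠ d.1 ∧
      b.1 ≠ c.1 ∧ b.1 ≠ d.1 ∧ c.1 ≠ d.1 := Iff.rfl
    simp only [this, ite_and_one]
    ring
  simp only [this, ← mul_sum, sum_same]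
  refine (col4 x (fun a b c d =>
    ((if a ≠ b then 1 else 0) * (if a ≠ c then 1 else 0) * (if a ≠ d then 1 else 0) *
      (if b ≠ c then 1 else 0) * (if b ≠ d then 1 else 0) * (if c ≠ d then 1 else 0)) *
      (x a - 1))).trans ?_
  simp only [sum_er, mul_sum, sum_mul]
  refine sum_congr rfl fun a _ => sum_congr rfl fun b _ => sum_congr rfl fun c _ =>
    sum_congr rfl fun d _ => ?_
  ring

open Classical in
theorem evalC {k : ℕ} (x : Fin k → ℕ) :
    (∑ f : Fin 5 → (Σ t, Fin (x t)), if C5 (fun v => v.1) f then 1 else 0) =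
      ∑ a, (x a * (x a - 1)) * ∑ b ∈ univ.erase a, (x b * (x b - 1)) * ∑ c ∈ (univ.erase a).erase b, 
       x c := by
  rw [sum_fun5' σC]
  have : ∀ a b c d e : (Σ t, Fin (x t)), (if C5 (fun v => v.1) (![a,b,c,d,e] ∘ σC) then 1 else 0 : ℕ) = 
      ((if a.1 ≠ b.1 then 1 else 0) * (if a.1 ≠ c.1 then 1 else 0) * (if b.1 ≠ c.1 then 1 else 0)) *
      ((if a.1 = d.1 ∧ a ≠ d then 1 else 0) * (if b.1 = e.1 ∧ b ≠ e then 1 else 0)) := by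
    intro a b c d e
    have : C5 (fun v => v.1) (![a,b,c,d,e] ∘ σC) ↔ (a.1 = d.1 ∧ a ≠ d) ∧ (b.1 = e.1 ∧ b ≠ e) ∧
      a.1 ≠ b.1 ∧ a.1 ≠ c.1 ∧ b.1 ≠ c.1 := Iff.rfl
    simp only [this, ite_and_one]
    ring
  simp only [this, ← mul_sum, ← sum_mul, sum_same]
  simp only [sum_mul]
  refine (col3 x (fun a b c =>
    ((if a ≠ b then 1 else 0) * (if a ≠ c then 1 else 0) * (if b ≠ c then 1 else 0)) *
      ((x a - 1) * (x b - 1)))).trans ?_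
  simp only [sum_er, mul_sum, sum_mul]
  refine sum_congr rfl fun a _ => sum_congr rfl fun b _ => sum_congr rfl fun c _ => ?_
  ring

end

open SimpleGraph in
theorem copies_P5 {k : ℕ} (x : Fin k → ℕ) :
    Nat.card (Copy (cycleGraph 5) (completeMultipartiteGraph (fun t => Fin (x t)))) =
    Nat.card {f : Fin 5 → (Σ t, Fin (x t)) // P5 (fun v => v.1) f} := by
  apply Nat.card_congr
  refine
    { toFun := fun f => ⟨f, ?_⟩
      invFun := fun f => ⟨⟨f.1, ?_⟩, ?_⟩
      left_inv := fun f => rfl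
      right_inv := fun f => rfl }
  · have hi := f.injective
    have ha : ∀ a b : Fin 5, (cycleGraph 5).Adj a b → (f a).1 ≠ (f b).1 := fun a b h => f.toHom.map_adj h
    refine ⟨⟨ha _ _ (by decide), ha _ _ (by decide), ha _ _ (by decide), ha _ _ (by decide), ha _ _ (by decide)⟩, ?_, ?_, ?_, ?_, ?_⟩ <;>
    exact fun h => absurd (hi h) (by decide)
  · obtain ⟨f, ⟨h1, h2, h3, h4, h5⟩, -⟩ := f
    intro a b h
    change (f a).1 ≠ (f b).1
    revert h
    fin_cases a <;> fin_cases b <;> first | (intro _; assumption) | (intro _; apply Ne.symm; assumption) | (intro h; exact absurd h (by decide))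
  · obtain ⟨f, ⟨h1, h2, h3, h4, h5⟩, h6, h7, h8, h9, h10⟩ := f
    have g1 : f 0 ≠ f 1 := fun h => h1 (by rw [h])
    have g2 : f 1 ≠ f 2 := fun h => h2 (by rw [h])
    have g3 : f 2 ≠ f 3 := fun h => h3 (by rw [h])
    have g4 : f 3 ≠ f 4 := fun h => h4 (by rw [h])
    have g5 : f 4 ≠ f 0 := fun h => h5 (by rw [h])
    intro a b h
    change f a = f b at h
    revert h
    fin_cases a <;> fin_cases b <;> first | (intro _; rfl) | (intro h; exfalso; revert h; assumption) | (intro h; exfalso; revert h; apply Ne.symm; assumption)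

theorem stmt_12 (k : ℕ) (x : Fin k → ℕ) :
    nuC5 (SimpleGraph.completeMultipartiteGraph (fun t => Fin (x t))) =
      12 * ∑ s ∈ (Finset.univ : Finset (Fin k)).powersetCard 5, ∏ i ∈ s, x i
      + 6 * ∑ a : Fin k, (x a).choose 2 *
          ∑ s ∈ ((Finset.univ : Finset (Fin k)).erase a).powersetCard 3, ∏ i ∈ s, x i
      + 4 * ∑ s ∈ (Finset.univ : Finset (Fin k)).powersetCard 2,
          (∏ i ∈ s, (x i).choose 2) * ∑ c ∈ (Finset.univ : Finset (Fin k)) \ s, x c := by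
  have hP := copies_eq (SimpleGraph.completeMultipartiteGraph (fun t => Fin (x t)))
  rw [copies_P5, sum_split5, evalA, evalB, evalC, ← esymm5] at hP
  have hx : ∀ a, x a * (x a - 1) = 2 * (x a).choose 2 := by
    intro a
    rw [Nat.choose_two_right, Nat.mul_div_cancel' (Nat.even_mul_pred_self _).two_dvd]
  have pull : ∀ (T : Finset (Fin k)) (m : ℕ) (f g : Fin k → ℕ),
      ∑ b ∈ T, (m * f b) * g b = m * ∑ b ∈ T, f b * g b := by
    intro T m f g
    rw [Finset.mul_sum]
    exact Finset.sum_congr rfl fun b _ => by ring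
  have pull' : ∀ (T : Finset (Fin k)) (m : ℕ) (f g : Fin k → ℕ),
      ∑ b ∈ T, f b * (m * g b) = m * ∑ b ∈ T, f b * g b := by
    intro T m f g
    rw [Finset.mul_sum]
    exact Finset.sum_congr rfl fun b _ => by ring
  simp only [hx, ← esymm3] at hP
  simp only [pull, pull'] at hP
  rw [← pairs2] at hP
  unfold nuC5
  omega
end
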